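/- Let m be a positive integer, let Y be an invertible m×m real matrix, and let D₁ and D₂ be positive diagonal m×m matrices. Let (D̂_r, D̂_c) be a null minimizer for Y and let (D̃_r, D̃_c) be a null minimizer for Ỹ = D₁ Y D₂. Then log det(D̃_c ⊗ D̃_r) − m·log det(Ỹ Ỹᵗ / m) = log det(D̂_c ⊗ D̂_r) − m·log det(Y Yᵗ / m); that is, the likelihood ratio test statistic T satisfies T(D₁ Y D₂) = T(Y). -/

import Mathlib

open Matrix

/-- A positive diagonal matrix: a diagonal matrix with strictly positive diagonal entries. -/
def IsPosDiag {m : ℕ} (D : Matrix (Fin m) (Fin m) ℝ) : Prop :=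
  D.IsDiag ∧ ∀ i, 0 < D i i

/-- The scaled log-likelihood of the mean-zero matrix normal model:
`l(Σr, Σc; Y) = tr(Σr⁻¹ Y Σc⁻¹ Yᵗ) + log det (Σc ⊗ Σr)`. -/
noncomputable def sll {m : ℕ} (Sr Sc Y : Matrix (Fin m) (Fin m) ℝ) : ℝ :=
  (Sr⁻¹ * Y * Sc⁻¹ * Yᵀ).trace + Real.log (Matrix.kroneckerMap (· * ·) Sc Sr).det

/-- A null minimizer for `Y`: a pair of positive diagonal matrices minimizing
`l(D_r, D_c; Y)` over all pairs of positive diagonal matrices. -/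
def IsNullMinimizer {m : ℕ} (Y Dr Dc : Matrix (Fin m) (Fin m) ℝ) : Prop :=
  IsPosDiag Dr ∧ IsPosDiag Dc ∧
    ∀ Dr' Dc' : Matrix (Fin m) (Fin m) ℝ, IsPosDiag Dr' → IsPosDiag Dc' →
      sll Dr Dc Y ≤ sll Dr' Dc' Y

lemma IsPosDiag.det_pos {m : ℕ} {D : Matrix (Fin m) (Fin m) ℝ} (h : IsPosDiag D) :
    0 < D.det := by
  rw [← h.1.diagonal_diag, Matrix.det_diagonal]
  exact Finset.prod_pos fun i _ => h.2 i

lemma IsPosDiag.mul {m : ℕ} {D E : Matrix (Fin m) (Fin m) ℝ} (h : IsPosDiag D)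
    (k : IsPosDiag E) : IsPosDiag (D * E) := by
  rw [← h.1.diagonal_diag, ← k.1.diagonal_diag, Matrix.diagonal_mul_diagonal]
  refine ⟨Matrix.isDiag_diagonal _, fun i => ?_⟩
  simpa using mul_pos (h.2 i) (k.2 i)

lemma IsPosDiag.inv {m : ℕ} {D : Matrix (Fin m) (Fin m) ℝ} (h : IsPosDiag D) :
    IsPosDiag D⁻¹ := by
  have hinv : D⁻¹ = Matrix.diagonal fun i => (D i i)⁻¹ := by
    apply Matrix.inv_eq_left_inv
    conv_lhs => rw [← h.1.diagonal_diag]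
    rw [Matrix.diagonal_mul_diagonal, ← Matrix.diagonal_one]
    congr 1
    funext i
    simp [(h.2 i).ne']
  rw [hinv]
  refine ⟨Matrix.isDiag_diagonal _, fun i => ?_⟩
  simpa using h.2 i

lemma IsPosDiag.transpose_eq {m : ℕ} {D : Matrix (Fin m) (Fin m) ℝ} (h : IsPosDiag D) :
    Dᵀ = D := h.1.isSymm

lemma IsPosDiag.smul {m : ℕ} {D : Matrix (Fin m) (Fin m) ℝ} (h : IsPosDiag D) {t : ℝ}
    (ht : 0 < t) : IsPosDiag (t • D) :=
  ⟨h.1.smul t, fun i => by simpa using mul_pos ht (h.2 i)⟩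

lemma log_det_kron {m : ℕ} {C R : Matrix (Fin m) (Fin m) ℝ} (hC : IsPosDiag C)
    (hR : IsPosDiag R) :
    Real.log (Matrix.kroneckerMap (· * ·) C R).det
      = m * Real.log C.det + m * Real.log R.det := by
  have := Matrix.det_kronecker C R
  rw [this, Real.log_mul (pow_pos hC.det_pos _).ne' (pow_pos hR.det_pos _).ne',
    Real.log_pow, Real.log_pow]
  simp

lemma trace_null {m : ℕ} {Y Dr Dc : Matrix (Fin m) (Fin m) ℝ} (h : IsNullMinimizer Y Dr Dc) :
    (Dr⁻¹ * Y * Dc⁻¹ * Yᵀ).trace = (m : ℝ) * m := by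
  obtain ⟨hr, hc, hmin⟩ := h
  set a := (Dr⁻¹ * Y * Dc⁻¹ * Yᵀ).trace with ha
  have key : ∀ t : ℝ, 0 < t → a ≤ t⁻¹ * a + (m : ℝ) * m * Real.log t := by
    intro t ht
    have h1 := hmin (t • Dr) Dc (hr.smul ht) hc
    have hinv : (t • Dr)⁻¹ = t⁻¹ • Dr⁻¹ := by
      apply Matrix.inv_eq_left_inv
      rw [smul_mul_smul_comm, inv_mul_cancel₀ ht.ne',
        Matrix.nonsing_inv_mul _ hr.det_pos.ne'.isUnit, one_smul]
    unfold sll at h1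
    rw [log_det_kron hc hr, log_det_kron hc (hr.smul ht), hinv, Matrix.det_smul,
      Real.log_mul (pow_pos ht _).ne' hr.det_pos.ne', Real.log_pow] at h1
    simp only [Matrix.smul_mul, Matrix.trace_smul, Fintype.card_fin, smul_eq_mul] at h1
    rw [← ha] at h1
    linarith
  have hd : HasDerivAt (fun t : ℝ => t⁻¹ * a + (m : ℝ) * m * Real.log t)
      (-((1 : ℝ) ^ 2)⁻¹ * a + (m : ℝ) * m * (1 : ℝ)⁻¹) 1 :=
    ((hasDerivAt_inv one_ne_zero).mul_const a).add
      ((Real.hasDerivAt_log one_ne_zero).const_mul _)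
  have hl : IsLocalMin (fun t : ℝ => t⁻¹ * a + (m : ℝ) * m * Real.log t) 1 := by
    filter_upwards [lt_mem_nhds (zero_lt_one : (0 : ℝ) < 1)] with t ht
    simpa using key t ht
  have := hl.hasDerivAt_eq_zero hd
  norm_num at this
  linarith

lemma log_det_le {m : ℕ} {Y D₁ D₂ Dr Dc Dr' Dc' : Matrix (Fin m) (Fin m) ℝ}
    (hD₁ : IsPosDiag D₁) (hD₂ : IsPosDiag D₂)
    (h : IsNullMinimizer Y Dr Dc) (h' : IsNullMinimizer (D₁ * Y * D₂) Dr' Dc') :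
    Real.log (Matrix.kroneckerMap (· * ·) Dc' Dr').det
      ≤ Real.log (Matrix.kroneckerMap (· * ·) Dc Dr).det
        + 2 * m * (Real.log D₁.det + Real.log D₂.det) := by
  have t := trace_null h
  have t' := trace_null h'
  obtain ⟨hr, hc, -⟩ := h
  obtain ⟨-, -, hmin⟩ := h'
  have hr1 := (hD₁.mul hr).mul hD₁
  have hc1 := (hD₂.mul hc).mul hD₂
  have h1 := hmin _ _ hr1 hc1
  have u1 := hD₁.det_pos.ne'.isUnit
  have u2 := hD₂.det_pos.ne'.isUnit
  have e : ((D₁ * Dr * D₁)⁻¹ * (D₁ * Y * D₂) * (D₂ * Dc * D₂)⁻¹ * (D₁ * Y * D₂)ᵀ).trace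
      = (Dr⁻¹ * Y * Dc⁻¹ * Yᵀ).trace := by
    have e1 : (D₁ * Dr * D₁)⁻¹ * (D₁ * Y * D₂) * (D₂ * Dc * D₂)⁻¹ * (D₁ * Y * D₂)ᵀ
        = D₁⁻¹ * ((Dr⁻¹ * Y * Dc⁻¹ * Yᵀ) * D₁) := by
      simp only [Matrix.mul_inv_rev, Matrix.transpose_mul, hD₁.transpose_eq, hD₂.transpose_eq,
        Matrix.mul_assoc]
      rw [Matrix.nonsing_inv_mul_cancel_left _ _ u1, Matrix.mul_nonsing_inv_cancel_left _ _ u2,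
        Matrix.nonsing_inv_mul_cancel_left _ _ u2]
    rw [e1, Matrix.trace_mul_comm, Matrix.mul_assoc, Matrix.mul_nonsing_inv _ u1, Matrix.mul_one]
  unfold sll at h1
  rw [t', e, t, log_det_kron hc1 hr1, Matrix.det_mul, Matrix.det_mul, Matrix.det_mul,
    Matrix.det_mul] at h1
  have p1 := hD₁.det_pos.ne'
  have p2 := hD₂.det_pos.ne'
  have pr := hr.det_pos.ne'
  have pc := hc.det_pos.ne'
  rw [Real.log_mul (mul_ne_zero p2 pc) p2, Real.log_mul p2 pc,
    Real.log_mul (mul_ne_zero p1 pr) p1, Real.log_mul p1 pr] at h1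
  rw [log_det_kron hc hr]
  linarith

/-- The likelihood ratio test statistic
`T(Y) = log det (D̂_c ⊗ D̂_r) − m·log det(Y Yᵗ/m)` is invariant under left and right
multiplication of the data by positive diagonal matrices: `T(D₁ Y D₂) = T(Y)`. -/
theorem lrt_statistic_diagonal_invariant
    (m : ℕ) (hm : 0 < m) (Y D₁ D₂ Dr Dc Dr' Dc' : Matrix (Fin m) (Fin m) ℝ)
    (hY : IsUnit Y.det) (hD₁ : IsPosDiag D₁) (hD₂ : IsPosDiag D₂)
    (h : IsNullMinimizer Y Dr Dc)
    (h' : IsNullMinimizer (D₁ * Y * D₂) Dr' Dc') :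
    Real.log (Matrix.kroneckerMap (· * ·) Dc' Dr').det
        - m * Real.log (((m : ℝ)⁻¹ • ((D₁ * Y * D₂) * (D₁ * Y * D₂)ᵀ)).det)
      = Real.log (Matrix.kroneckerMap (· * ·) Dc Dr).det
        - m * Real.log (((m : ℝ)⁻¹ • (Y * Yᵀ)).det) := by
  have u1 := hD₁.det_pos.ne'.isUnit
  have u2 := hD₂.det_pos.ne'.isUnit
  have l1 := log_det_le hD₁ hD₂ h h'
  have hback : D₁⁻¹ * (D₁ * Y * D₂) * D₂⁻¹ = Y := by
    rw [Matrix.mul_assoc D₁, Matrix.nonsing_inv_mul_cancel_left _ _ u1,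
      Matrix.mul_nonsing_inv_cancel_right _ _ u2]
  have l2 := log_det_le (Y := D₁ * Y * D₂) (Dr' := Dr) (Dc' := Dc) hD₁.inv hD₂.inv h'
    (by rw [hback]; exact h)
  rw [Matrix.det_nonsing_inv, Matrix.det_nonsing_inv, Ring.inverse_eq_inv',
    Real.log_inv, Real.log_inv] at l2
  have p1 := hD₁.det_pos.ne'
  have p2 := hD₂.det_pos.ne'
  have py := hY.ne_zero
  have hmm : ((m : ℝ)⁻¹) ^ m ≠ 0 := pow_ne_zero _ (inv_ne_zero (by exact_mod_cast hm.ne'))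
  have e : Real.log (((m : ℝ)⁻¹ • ((D₁ * Y * D₂) * (D₁ * Y * D₂)ᵀ)).det)
      = Real.log (((m : ℝ)⁻¹ • (Y * Yᵀ)).det)
        + 2 * (Real.log D₁.det + Real.log D₂.det) := by
    have e0 : ((m : ℝ)⁻¹ • ((D₁ * Y * D₂) * (D₁ * Y * D₂)ᵀ)).det
        = ((m : ℝ)⁻¹ • (Y * Yᵀ)).det * (D₁.det * D₂.det) ^ 2 := by
      simp only [Matrix.det_smul, Matrix.det_mul, Matrix.det_transpose]
      ring
    have e1 : ((m : ℝ)⁻¹ • (Y * Yᵀ)).det ≠ 0 := by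
      simp only [Matrix.det_smul, Matrix.det_mul, Matrix.det_transpose, Fintype.card_fin]
      exact mul_ne_zero hmm (mul_ne_zero py py)
    rw [e0, Real.log_mul e1 (pow_ne_zero _ (mul_ne_zero p1 p2)), Real.log_pow,
      Real.log_mul p1 p2]
    norm_num
  rw [e]
  linarith
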